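/- Signed change-of-variables formula with topological degree (the area-formula step in the proof of the main theorem). Let n ≥ 1, let f : ℝⁿ → ℝⁿ be C¹, let K ⊂ ℝⁿ be compact and measurable, and let g : ℝⁿ → ℝ be continuous. Assume that for Lebesgue-a.e. p ∈ ℝⁿ the set {x ∈ K : f(x) = p and det Df(x) ≠ 0} is finite, define d(p) := Σ_{x ∈ K, f(x) = p} sgn(det Df(x)) (points with det Df(x) = 0 contribute 0), and assume that x ↦ g(f(x)) · det Df(x) is Lebesgue integrable on K and p ↦ g(p) · d(p) is Lebesgue integrable on ℝⁿ. Then ∫_K g(f(x)) · det Df(x) dx = ∫_{ℝⁿ} g(p) · d(p) dp. -/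

import Mathlib

open MeasureTheory

/-!
On a countable measurable partition of the nondegenerate points into sets where `f` is injective,
the formula is the classical change of variables for injective maps, with `|det Df|` turned into
`det Df` by the sign in the multiplicity. Applied to `‖g‖`, the same formula bounds the integral of
`‖g‖` against the number of pieces hit, so integrability of `det Df • (g ∘ f)` already forces
almost every `p` with `g p ≠ 0` to have finitely many nondegenerate preimages; the pieces can then
be summed. Degenerate points contribute to neither side.
-/

section SignedMultiplicity

open Set Function
open scoped NNReal ENNReal

theorem abs_mul_real_sign (r : ℝ) : |r| * Real.sign r = r := by
  rcases lt_trichotomy r 0 with h | rfl | h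
  · rw [Real.sign_of_neg h, abs_of_neg h, neg_mul_neg, mul_one]
  · rw [abs_zero, zero_mul]
  · rw [Real.sign_of_pos h, abs_of_pos h, mul_one]

theorem enorm_real_sign_of_ne_zero {r : ℝ} (hr : r ≠ 0) : ‖Real.sign r‖ₑ = 1 := by
  rcases Real.sign_apply_eq_of_ne_zero r hr with h | h <;> simp [h]

theorem integrable_of_ae_hasSum {α ι G : Type*} [MeasurableSpace α] {μ : Measure α} [Countable ι]
    [NormedAddCommGroup G] {F : ι → α → G} {φ : α → G} (hF : ∀ i, AEStronglyMeasurable (F i) μ)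
    (hF_sum : ∑' i, ∫⁻ a, ‖F i a‖ₑ ∂μ ≠ ∞) (hφ : ∀ᵐ a ∂μ, HasSum (F · a) (φ a)) :
    Integrable φ μ := by
  refine ⟨aestronglyMeasurable_of_tendsto_ae Filter.atTop
    (fun I : Finset ι => I.aestronglyMeasurable_fun_sum fun i _ => hF i) hφ, ?_⟩
  calc ∫⁻ a, ‖φ a‖ₑ ∂μ ≤ ∫⁻ a, ∑' i, ‖F i a‖ₑ ∂μ := by
        refine lintegral_mono_ae ?_
        filter_upwards [hφ] with a ha
        exact ha.tsum_eq ▸ enorm_tsum_le_tsum_enorm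
    _ = ∑' i, ∫⁻ a, ‖F i a‖ₑ ∂μ := lintegral_tsum fun i => (hF i).enorm
    _ < ∞ := hF_sum.lt_top

section NormedSpace

variable {E : Type*} [NormedAddCommGroup E] [NormedSpace ℝ E] {f : E → E} {f' : E → E →L[ℝ] E}
  {s : Set E}

/-- The number of points of `s` in the fiber of `f` above `p`, counted with the sign of the
determinant of the derivative `f'`. As a finitary sum, it is `0` by convention when infinitely many
points of the fiber are nondegenerate. -/
noncomputable def signedMultiplicity (f : E → E) (f' : E → E →L[ℝ] E) (s : Set E) (p : E) : ℝ :=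
  ∑ᶠ x ∈ {x | x ∈ s ∧ f x = p}, Real.sign (f' x).det

theorem signedMultiplicity_apply_of_injOn (hf : InjOn f s) {x : E} (hx : x ∈ s) :
    signedMultiplicity f f' s (f x) = Real.sign (f' x).det := by
  have fiber_eq : {y | y ∈ s ∧ f y = f x} = {x} := by
    ext y
    exact ⟨fun h => hf h.1 hx h.2, by rintro rfl; exact ⟨hx, rfl⟩⟩
  rw [signedMultiplicity, fiber_eq, finsum_mem_singleton]

theorem signedMultiplicity_of_notMem_image {p : E} (hp : p ∉ f '' s) :
    signedMultiplicity f f' s p = 0 := by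
  have fiber_eq : {x | x ∈ s ∧ f x = p} = ∅ := eq_empty_of_forall_notMem fun x hx => hp ⟨x, hx⟩
  rw [signedMultiplicity, fiber_eq, finsum_mem_empty]

theorem hasSum_signedMultiplicity_iUnion {ι : Type*} {t : ι → Set E}
    (hd : Pairwise (Disjoint on t)) {p : E} (hfiber : ∀ i, {x | x ∈ t i ∧ f x = p}.Finite)
    (hp : {i | p ∈ f '' t i}.Finite) :
    HasSum (fun i => signedMultiplicity f f' (t i) p) (signedMultiplicity f f' (⋃ i, t i) p) := by
  have fiber_eq : {x | x ∈ ⋃ i, t i ∧ f x = p} =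
      ⋃ i ∈ {i | p ∈ f '' t i}, {x | x ∈ t i ∧ f x = p} := by
    ext x
    simp only [mem_iUnion, mem_ofPred_eq, mem_image, exists_prop]
    exact ⟨fun ⟨⟨i, hi⟩, hx⟩ => ⟨i, ⟨x, hi, hx⟩, hi, hx⟩, fun ⟨i, _, hi, hx⟩ => ⟨⟨i, hi⟩, hx⟩⟩
  have fiber_disjoint : {i | p ∈ f '' t i}.PairwiseDisjoint fun i => {x | x ∈ t i ∧ f x = p} :=
    fun i _ j _ hij => (hd hij).mono (fun _ h => h.1) fun _ h => h.1
  rw [signedMultiplicity, fiber_eq,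
    finsum_mem_biUnion fiber_disjoint hp fun i _ => hfiber i,
    finsum_mem_eq_finite_toFinset_sum _ hp]
  refine hasSum_sum_of_ne_finset_zero fun i hi => signedMultiplicity_of_notMem_image ?_
  exact fun h => hi (hp.mem_toFinset.2 h)

variable {F : Type*} [NormedAddCommGroup F] [NormedSpace ℝ F] (g : E → F)

theorem abs_det_smul_signedMultiplicity_smul (hf : InjOn f s) {x : E} (hx : x ∈ s) :
    |(f' x).det| • signedMultiplicity f f' s (f x) • g (f x) = (f' x).det • g (f x) := by
  rw [signedMultiplicity_apply_of_injOn hf hx, smul_smul, abs_mul_real_sign]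

theorem support_signedMultiplicity_smul_subset :
    support (fun p => signedMultiplicity f f' s p • g p) ⊆ f '' s := by
  intro p
  contrapose
  intro hp
  rw [notMem_support, signedMultiplicity_of_notMem_image hp, zero_smul]

theorem finite_setOf_mem_image_of_tsum_enorm_ne_top {ι : Type*} {t : ι → Set E}
    (hinj : ∀ i, InjOn f (t i)) (hdet : ∀ i, ∀ x ∈ t i, (f' x).det ≠ 0) {p : E}
    (hsum : ∑' i, ‖signedMultiplicity f f' (t i) p • g p‖ₑ ≠ ∞) (hg : g p ≠ 0) :
    {i | p ∈ f '' t i}.Finite := by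
  refine (ENNReal.finite_const_le_of_tsum_ne_top hsum (enorm_ne_zero.2 hg)).subset ?_
  rintro i ⟨x, hx, rfl⟩
  rw [mem_ofPred_eq, enorm_smul, signedMultiplicity_apply_of_injOn (hinj i) hx,
    enorm_real_sign_of_ne_zero (hdet i x hx), one_mul]

theorem ae_hasSum_signedMultiplicity_smul [MeasurableSpace E] {μ : Measure E} {ι : Type*}
    [Countable ι] {t : ι → Set E} (hd : Pairwise (Disjoint on t))
    (hinj : ∀ i, InjOn f (t i)) (hdet : ∀ i, ∀ x ∈ t i, (f' x).det ≠ 0)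
    (hmeas : ∀ i, AEStronglyMeasurable (fun p => signedMultiplicity f f' (t i) p • g p) μ)
    (hsum : ∑' i, ∫⁻ p, ‖signedMultiplicity f f' (t i) p • g p‖ₑ ∂μ ≠ ∞) :
    ∀ᵐ p ∂μ, HasSum (fun i => signedMultiplicity f f' (t i) p • g p)
      (signedMultiplicity f f' (⋃ i, t i) p • g p) := by
  rw [← lintegral_tsum fun i => (hmeas i).enorm] at hsum
  filter_upwards [ae_lt_top' (AEMeasurable.tsum fun i => (hmeas i).enorm) hsum] with p hp
  rcases eq_or_ne (g p) 0 with hg | hg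
  · simpa only [hg, smul_zero] using hasSum_zero
  · have hfiber (i : ι) : {x | x ∈ t i ∧ f x = p}.Finite :=
      Set.Subsingleton.finite fun x hx y hy => hinj i hx.1 hy.1 (hx.2.trans hy.2.symm)
    exact (hasSum_signedMultiplicity_iUnion hd hfiber
      (finite_setOf_mem_image_of_tsum_enorm_ne_top g hinj hdet hp.ne hg)).smul_const (g p)

end NormedSpace

section FiniteDimensional

variable {E : Type*} [NormedAddCommGroup E] [NormedSpace ℝ E] [FiniteDimensional ℝ E]
  {f : E → E} {f' : E → E →L[ℝ] E} {s : Set E}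

theorem exists_forall_approximatesLinearOn_injOn {A : E →L[ℝ] E} (hA : A.det ≠ 0) :
    ∃ r : ℝ≥0, r ≠ 0 ∧ ∀ (f : E → E) (u : Set E), ApproximatesLinearOn f A u r → InjOn f u := by
  obtain ⟨B, rfl⟩ : ∃ B : E ≃L[ℝ] E, (B : E →L[ℝ] E) = A :=
    ⟨A.toContinuousLinearEquivOfDetNeZero hA, A.coe_toContinuousLinearEquivOfDetNeZero hA⟩
  rcases subsingleton_or_nontrivial E with hE | hE
  · exact ⟨1, one_ne_zero, fun f _ _ => injOn_of_injective (injective_of_subsingleton f)⟩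
  · have hpos : 0 < ‖(B.symm : E →L[ℝ] E)‖₊⁻¹ := inv_pos.2 B.nnnorm_symm_pos
    exact ⟨_, (half_pos hpos).ne', fun _ _ hu => hu.injOn (Or.inr (half_lt_self hpos))⟩

variable [MeasurableSpace E] [BorelSpace E]

theorem exists_partition_injOn_of_det_ne_zero (hs : MeasurableSet s)
    (hf' : ∀ x ∈ s, HasFDerivWithinAt f (f' x) s x) (hdet : ∀ x ∈ s, (f' x).det ≠ 0) :
    ∃ t : ℕ → Set E, Pairwise (Disjoint on t) ∧ (∀ n, MeasurableSet (t n)) ∧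
      ⋃ n, t n = s ∧ ∀ n, InjOn f (t n) := by
  rcases s.eq_empty_or_nonempty with rfl | hne
  · exact ⟨fun _ => ∅, fun _ _ _ => disjoint_empty _, fun _ => .empty, by simp, by simp⟩
  have hr (A : E →L[ℝ] E) : ∃ r : ℝ≥0, r ≠ 0 ∧
      (A.det ≠ 0 → ∀ u, ApproximatesLinearOn f A u r → InjOn f u) := by
    by_cases hA : A.det = 0
    · exact ⟨1, one_ne_zero, fun h => (h hA).elim⟩
    · obtain ⟨r, hr0, hr⟩ := exists_forall_approximatesLinearOn_injOn hA
      exact ⟨r, hr0, fun _ => hr f⟩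
  choose r hr0 hrinj using hr
  obtain ⟨t, A, hd, htm, hcov, happ, hA⟩ :=
    exists_partition_approximatesLinearOn_of_hasFDerivWithinAt f s f' hf' r hr0
  refine ⟨fun n => s ∩ t n, fun i j hij => (hd hij).mono inter_subset_right inter_subset_right,
    fun n => hs.inter (htm n), ?_, fun n => ?_⟩
  · rw [← inter_iUnion, inter_eq_left.2 hcov]
  · obtain ⟨y, hy, hAy⟩ := hA hne n
    exact hrinj (A n) (hAy ▸ hdet y hy) _ (happ n)

variable (μ : Measure E) [μ.IsAddHaarMeasure]

theorem exists_measurable_subset_det_ne_zero (hs : MeasurableSet s)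
    (hf' : ∀ x ∈ s, HasFDerivWithinAt f (f' x) s x) :
    ∃ u ⊆ s, MeasurableSet u ∧ (∀ x ∈ u, (f' x).det ≠ 0) ∧
      ∀ᵐ x ∂μ, x ∈ s → (f' x).det ≠ 0 → x ∈ u := by
  have hnull : NullMeasurableSet ({x | (f' x).det ≠ 0} ∩ s) μ := by
    rw [← nullMeasurableSet_restrict hs.nullMeasurableSet]
    exact (ContinuousLinearMap.continuous_det.measurable.comp_aemeasurable
      (aemeasurable_fderivWithin μ hs hf')).nullMeasurableSet_preimage
        (measurableSet_singleton 0).compl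
  obtain ⟨u, hu, hum, hae⟩ := hnull.exists_measurable_subset_ae_eq
  refine ⟨u, fun x hx => (hu hx).2, hum, fun x hx => (hu hx).1, ?_⟩
  filter_upwards [hae.mem_iff] with x hx hxs hdet using hx.2 ⟨hdet, hxs⟩

theorem signedMultiplicity_ae_eq_of_subset {u : Set E} (hus : u ⊆ s)
    (hf : DifferentiableOn ℝ f s) (hu : ∀ᵐ x ∂μ, x ∈ s → (f' x).det ≠ 0 → x ∈ u) :
    ∀ᵐ p ∂μ, signedMultiplicity f f' s p = signedMultiplicity f f' u p := by
  let N := {x | x ∈ s ∧ (f' x).det ≠ 0 ∧ x ∉ u}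
  have hN : μ N = 0 := by simpa only [ae_iff, Classical.not_imp] using hu
  have himage : μ (f '' N) = 0 :=
    addHaar_image_eq_zero_of_differentiableOn_of_addHaar_eq_zero μ (hf.mono fun _ hx => hx.1) hN
  filter_upwards [measure_eq_zero_iff_ae_notMem.1 himage] with p hp
  refine finsum_mem_inter_support_eq' _ _ _ fun x hx => and_congr_left fun hxp => ?_
  have hdet : (f' x).det ≠ 0 := Real.sign_eq_zero_iff.not.1 hx
  exact ⟨fun hxs => by_contra fun hxu => hp ⟨x, ⟨hxs, hdet, hxu⟩, hxp⟩, fun hxu => hus hxu⟩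

variable {F : Type*} [NormedAddCommGroup F] [NormedSpace ℝ F] {g : E → F}

section InjOn

theorem integrable_signedMultiplicity_smul_of_injOn (hs : MeasurableSet s)
    (hf' : ∀ x ∈ s, HasFDerivWithinAt f (f' x) s x) (hf : InjOn f s)
    (hint : IntegrableOn (fun x => (f' x).det • g (f x)) s μ) :
    Integrable (fun p => signedMultiplicity f f' s p • g p) μ := by
  rw [← integrableOn_iff_integrable_of_support_subset (support_signedMultiplicity_smul_subset g),
    integrableOn_image_iff_integrableOn_abs_det_fderiv_smul μ hs hf' hf]
  exact hint.congr_fun (fun x hx => (abs_det_smul_signedMultiplicity_smul g hf hx).symm) hs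

variable (g)

theorem integral_signedMultiplicity_smul_of_injOn (hs : MeasurableSet s)
    (hf' : ∀ x ∈ s, HasFDerivWithinAt f (f' x) s x) (hf : InjOn f s) :
    ∫ p, signedMultiplicity f f' s p • g p ∂μ = ∫ x in s, (f' x).det • g (f x) ∂μ := by
  rw [← setIntegral_eq_integral_of_forall_compl_eq_zero fun p hp =>
      notMem_support.1 (notMem_subset (support_signedMultiplicity_smul_subset g) hp),
    integral_image_eq_integral_abs_det_fderiv_smul μ hs hf' hf]
  exact setIntegral_congr_fun hs fun x hx => abs_det_smul_signedMultiplicity_smul g hf hx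

theorem lintegral_enorm_signedMultiplicity_smul_of_injOn (hs : MeasurableSet s)
    (hf' : ∀ x ∈ s, HasFDerivWithinAt f (f' x) s x) (hf : InjOn f s) :
    ∫⁻ p, ‖signedMultiplicity f f' s p • g p‖ₑ ∂μ =
      ∫⁻ x in s, ‖(f' x).det • g (f x)‖ₑ ∂μ := by
  have hsupport : support (fun p => ‖signedMultiplicity f f' s p • g p‖ₑ) ⊆ f '' s := by
    simpa only [support, ne_eq, enorm_eq_zero] using support_signedMultiplicity_smul_subset g
  rw [← setLIntegral_eq_of_support_subset hsupport,
    lintegral_image_eq_lintegral_abs_det_fderiv_mul μ hs hf' hf]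
  refine setLIntegral_congr_fun hs fun x hx => ?_
  simp only [← abs_det_smul_signedMultiplicity_smul g hf hx, enorm_smul,
    Real.enorm_eq_ofReal_abs, abs_abs]

end InjOn

theorem tsum_lintegral_enorm_signedMultiplicity_smul {ι : Type*} [Countable ι] {t : ι → Set E}
    (hd : Pairwise (Disjoint on t)) (htm : ∀ i, MeasurableSet (t i))
    (hf' : ∀ i, ∀ x ∈ t i, HasFDerivWithinAt f (f' x) (t i) x) (hinj : ∀ i, InjOn f (t i))
    (g : E → F) :
    ∑' i, ∫⁻ p, ‖signedMultiplicity f f' (t i) p • g p‖ₑ ∂μ =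
      ∫⁻ x in ⋃ i, t i, ‖(f' x).det • g (f x)‖ₑ ∂μ := by
  rw [lintegral_iUnion htm hd]
  exact tsum_congr fun i =>
    lintegral_enorm_signedMultiplicity_smul_of_injOn μ g (htm i) (hf' i) (hinj i)

theorem signed_area_formula_of_det_ne_zero (hs : MeasurableSet s)
    (hf' : ∀ x ∈ s, HasFDerivWithinAt f (f' x) s x) (hdet : ∀ x ∈ s, (f' x).det ≠ 0)
    (hint : IntegrableOn (fun x => (f' x).det • g (f x)) s μ) :
    Integrable (fun p => signedMultiplicity f f' s p • g p) μ ∧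
      ∫ x in s, (f' x).det • g (f x) ∂μ = ∫ p, signedMultiplicity f f' s p • g p ∂μ := by
  obtain ⟨t, hd, htm, rfl, hinj⟩ := exists_partition_injOn_of_det_ne_zero hs hf' hdet
  have hts (n : ℕ) : t n ⊆ ⋃ n, t n := subset_iUnion t n
  have hf't (n : ℕ) : ∀ x ∈ t n, HasFDerivWithinAt f (f' x) (t n) x :=
    fun x hx => (hf' x (hts n hx)).mono (hts n)
  have hmeas (n : ℕ) : AEStronglyMeasurable (fun p => signedMultiplicity f f' (t n) p • g p) μ :=
    (integrable_signedMultiplicity_smul_of_injOn μ (htm n) (hf't n) (hinj n)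
      (hint.mono_set (hts n))).aestronglyMeasurable
  have hfinite : ∑' n, ∫⁻ p, ‖signedMultiplicity f f' (t n) p • g p‖ₑ ∂μ ≠ ∞ := by
    rw [tsum_lintegral_enorm_signedMultiplicity_smul μ hd htm hf't hinj g]
    exact hint.hasFiniteIntegral.ne
  have hae := ae_hasSum_signedMultiplicity_smul g hd hinj (fun n x hx => hdet x (hts n hx))
    hmeas hfinite
  refine ⟨integrable_of_ae_hasSum hmeas hfinite hae, ?_⟩
  calc ∫ x in ⋃ n, t n, (f' x).det • g (f x) ∂μ
      = ∑' n, ∫ x in t n, (f' x).det • g (f x) ∂μ := integral_iUnion htm hd hint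
    _ = ∑' n, ∫ p, signedMultiplicity f f' (t n) p • g p ∂μ := tsum_congr fun n =>
        (integral_signedMultiplicity_smul_of_injOn μ g (htm n) (hf't n) (hinj n)).symm
    _ = ∫ p, ∑' n, signedMultiplicity f f' (t n) p • g p ∂μ := (integral_tsum hmeas hfinite).symm
    _ = ∫ p, signedMultiplicity f f' (⋃ n, t n) p • g p ∂μ :=
        integral_congr_ae (hae.mono fun p hp => hp.tsum_eq)

theorem signed_change_of_variables_with_degree_general (hs : MeasurableSet s)
    (hf' : ∀ x ∈ s, HasFDerivWithinAt f (f' x) s x)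
    (hint : IntegrableOn (fun x => (f' x).det • g (f x)) s μ) :
    Integrable (fun p => signedMultiplicity f f' s p • g p) μ ∧
      ∫ x in s, (f' x).det • g (f x) ∂μ = ∫ p, signedMultiplicity f f' s p • g p ∂μ := by
  obtain ⟨u, hus, hum, hdet, hu⟩ := exists_measurable_subset_det_ne_zero μ hs hf'
  obtain ⟨hintegrable, hintegral⟩ := signed_area_formula_of_det_ne_zero μ hum
    (fun x hx => (hf' x (hus hx)).mono hus) hdet (hint.mono_set hus)
  have hmult : (fun p => signedMultiplicity f f' s p • g p) =ᵐ[μ]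
      fun p => signedMultiplicity f f' u p • g p := by
    filter_upwards [signedMultiplicity_ae_eq_of_subset μ hus
      (fun x hx => (hf' x hx).differentiableWithinAt) hu] with p hp
    rw [hp]
  have hdegenerate : ∀ᵐ x ∂μ, x ∈ s \ u → (f' x).det • g (f x) = 0 := by
    filter_upwards [hu] with x hx hxsu
    have hdet : (f' x).det = 0 := by_contra fun h => hxsu.2 (hx hxsu.1 h)
    rw [hdet, zero_smul]
  refine ⟨hintegrable.congr hmult.symm, ?_⟩
  rw [setIntegral_eq_of_subset_of_ae_sdiff_eq_zero hs.nullMeasurableSet hus hdegenerate,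
    hintegral, integral_congr_ae hmult]

end FiniteDimensional

end SignedMultiplicity

/-- **Signed change-of-variables formula with topological degree**
(the area-formula step in the proof of the main theorem).
For a `C¹` map `f : ℝⁿ → ℝⁿ`, a compact measurable set `K`, and a continuous `g`, with
`d(p) = Σ_{x ∈ K, f(x) = p} sgn(det Df(x))` (a.e. finitely many nondegenerate preimages):
`∫_K g(f(x)) det Df(x) dx = ∫_{ℝⁿ} g(p) d(p) dp`. -/
theorem signed_change_of_variables_with_degree (n : ℕ) (hn : 1 ≤ n)
    (f : (Fin n → ℝ) → (Fin n → ℝ)) (hf : ContDiff ℝ 1 f)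
    (K : Set (Fin n → ℝ)) (hK : IsCompact K) (hKm : MeasurableSet K)
    (g : (Fin n → ℝ) → ℝ) (hg : Continuous g)
    (hfin : ∀ᵐ p : Fin n → ℝ,
      {x | x ∈ K ∧ f x = p ∧ (fderiv ℝ f x).det ≠ 0}.Finite)
    (d : (Fin n → ℝ) → ℝ)
    (hd : ∀ p, d p = ∑ᶠ x ∈ {x | x ∈ K ∧ f x = p}, Real.sign (fderiv ℝ f x).det)
    (hint1 : IntegrableOn (fun x => g (f x) * (fderiv ℝ f x).det) K)
    (hint2 : Integrable fun p => g p * d p) :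
    ∫ x in K, g (f x) * (fderiv ℝ f x).det = ∫ p, g p * d p := by
  obtain rfl : d = signedMultiplicity f (fderiv ℝ f) K := funext hd
  simp only [mul_comm (g _)] at hint1 ⊢
  exact (signed_change_of_variables_with_degree_general volume hKm
    (fun x _ => (hf.differentiable one_ne_zero x).hasFDerivAt.hasFDerivWithinAt) hint1).2
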